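/- Let P, Q, R be n×n real symmetric positive definite matrices satisfying the Riccati-like equation P·R·P + (1/2)·Tr(R·P)·P = Q, and let ρ > 0. Then for every x ∈ ℝⁿ the identity xᵀQx − xᵀPRPx + (1/2)·(2√ρ − xᵀPx)·Tr(R·P) = √ρ·Tr(R·P) holds. In particular, for the function V(x) := −(1/4)·(2√ρ − xᵀPx)² defined on the region {x : xᵀPx ≤ 2√ρ}, whose Hessian is ∇²V(x) = −2·P·x·xᵀ·P + (2√ρ − xᵀPx)·P, one has xᵀQx + (1/2)·Tr(R·∇²V(x)) = √ρ·Tr(R·P) for all x in that region. -/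

import Mathlib

open Matrix

/-- Let `P, Q, R` be `n×n` real symmetric positive definite
matrices satisfying `P·R·P + (1/2)·Tr(R·P)·P = Q` and let `ρ > 0`. Then for
every `x ∈ ℝⁿ`,
`xᵀQx − xᵀPRPx + (1/2)·(2√ρ − xᵀPx)·Tr(R·P) = √ρ·Tr(R·P)`; in particular,
with the Hessian `∇²V(x) = −2·P·x·xᵀ·P + (2√ρ − xᵀPx)·P` of
`V(x) = −(1/4)(2√ρ − xᵀPx)²`, one has
`xᵀQx + (1/2)·Tr(R·∇²V(x)) = √ρ·Tr(R·P)` on the region `{x : xᵀPx ≤ 2√ρ}`. -/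
theorem stmt_16 (n : ℕ) (P Q R : Matrix (Fin n) (Fin n) ℝ)
    (hPsym : Pᵀ = P) (hQsym : Qᵀ = Q) (hRsym : Rᵀ = R)
    (hP : P.PosDef) (hQ : Q.PosDef) (hR : R.PosDef)
    (hric : P * R * P + ((1 : ℝ) / 2 * Matrix.trace (R * P)) • P = Q)
    (ρ : ℝ) (hρ : 0 < ρ) :
    (∀ x : Fin n → ℝ,
      x ⬝ᵥ Q *ᵥ x - x ⬝ᵥ (P * R * P) *ᵥ x +
        (1 / 2) * (2 * Real.sqrt ρ - x ⬝ᵥ P *ᵥ x) * Matrix.trace (R * P) =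
      Real.sqrt ρ * Matrix.trace (R * P)) ∧
    (∀ x : Fin n → ℝ, x ⬝ᵥ P *ᵥ x ≤ 2 * Real.sqrt ρ →
      x ⬝ᵥ Q *ᵥ x +
        (1 / 2) * Matrix.trace (R *
          ((-2 : ℝ) • (P * Matrix.vecMulVec x x * P) +
            (2 * Real.sqrt ρ - x ⬝ᵥ P *ᵥ x) • P)) =
      Real.sqrt ρ * Matrix.trace (R * P)) := by
  have h1 : ∀ x : Fin n → ℝ, x ⬝ᵥ Q *ᵥ x = x ⬝ᵥ (P * R * P) *ᵥ x +
      (1 / 2 * Matrix.trace (R * P)) * (x ⬝ᵥ P *ᵥ x) := by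
    intro x
    conv_lhs => rw [← hric]
    rw [Matrix.add_mulVec, dotProduct_add, Matrix.smul_mulVec, dotProduct_smul, smul_eq_mul]
  refine ⟨fun x => ?_, fun x _ => ?_⟩
  · rw [h1 x]
    ring
  · have h2 : Matrix.trace (R * (P * Matrix.vecMulVec x x * P)) = x ⬝ᵥ (P * R * P) *ᵥ x := by
      rw [← Matrix.mul_assoc, Matrix.trace_mul_comm, ← Matrix.mul_assoc, ← Matrix.mul_assoc,
        Matrix.mul_vecMulVec, Matrix.trace_vecMulVec, dotProduct_comm]
    rw [h1 x, Matrix.mul_add, Matrix.trace_add, Matrix.mul_smul, Matrix.mul_smul,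
      Matrix.trace_smul, Matrix.trace_smul, h2, smul_eq_mul, smul_eq_mul]
    ring
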